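/- For every A ∈ SL(2,ℝ), every α > 0 for which the first row of A satisfies (A₁₁, A₁₂) = r·(cos α, sin α) for some r > 0, and every y₀ ∈ ℝ, there exist ε₁ ∈ (0, π) and a smooth function q : [0,2π] → ℝ such that: q(t) = y₀ for all t ∈ [0,ε₁] ∪ [2π−ε₁, 2π]; for every x ∈ (ε₁, 2π−ε₁) there is an integer k ≥ 1 with q^(k)(x) ≠ 0; Φ_q(2π) = A; and θ_q(2π) = α. -/

import Mathlib

open Real Set Matrix

/-- `Φ` is the fundamental matrix of the potential `q`: `Φ(0) = I` and
`Φ' = [[0,1],[q,0]]·Φ`. -/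
def IsFundMatrix (q : ℝ → ℝ) (Φ : ℝ → Matrix (Fin 2) (Fin 2) ℝ) : Prop :=
  Φ 0 = 1 ∧
    ∀ t : ℝ, ∀ i j, HasDerivAt (fun s => Φ s i j) ((!![0, 1; q t, 0] * Φ t) i j) t

/-- `θ` is the continuous argument lift on `[0,2π]` of the first row of `Φ`. -/
def IsArgLift (Φ : ℝ → Matrix (Fin 2) (Fin 2) ℝ) (θ : ℝ → ℝ) : Prop :=
  ContinuousOn θ (Icc 0 (2 * π)) ∧ θ 0 = 0 ∧
    ∀ t ∈ Icc (0:ℝ) (2 * π),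
      Φ t 0 0 = Real.sqrt ((Φ t 0 0) ^ 2 + (Φ t 0 1) ^ 2) * Real.cos (θ t) ∧
      Φ t 0 1 = Real.sqrt ((Φ t 0 0) ^ 2 + (Φ t 0 1) ^ 2) * Real.sin (θ t)

/-!
Write the first row of `Φ` as `ρ (cos θ, sin θ)`. The Wronskian is `1`, so `θ' = ρ⁻²`, and the
Hill equation becomes the Ermakov–Pinney equation `ρ'' = q ρ + ρ⁻³`. Hence `q` may be read off
from any positive `ρ`: the lifted monodromy is prescribed by `ρ` and `ρ'` at the two endpoints
together with `∫ ρ⁻² = α`.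

Near `0` and `2π` take for `ρ` the radii `P` and `Q` of solutions with constant potential `y₀`.
In between, `ρ⁻²` is glued from `P⁻²` and `Q⁻²` by functions analytic inside the gluing interval:
a crossfade damped until its integral falls below `α`, plus a positive bump supplying the
difference. The bump is chosen so that `ρ` is not identically `P`. If `q` were flat at an interior
point, analyticity would give `q = y₀` up to the right end of the gluing interval, and uniqueness
for the Hill equation would force `ρ = P` there.
-/

open scoped ContDiff

section HillEquation

/-- `M` solves the matrix Hill equation `M' = [[0,1],[q,0]]·M`: this is `IsFundMatrix` with no
prescribed initial value. -/
def IsHillSolution (q : ℝ → ℝ) (M : ℝ → Matrix (Fin 2) (Fin 2) ℝ) : Prop :=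
  ∀ t : ℝ, ∀ i j, HasDerivAt (fun s => M s i j) ((!![0, 1; q t, 0] * M t) i j) t

namespace IsHillSolution

variable {p q : ℝ → ℝ} {M N : ℝ → Matrix (Fin 2) (Fin 2) ℝ} {a b t : ℝ}

lemma hasDerivAt_row_zero (hM : IsHillSolution q M) (t : ℝ) (j : Fin 2) :
    HasDerivAt (fun s => M s 0 j) (M t 1 j) t := by
  simpa [Matrix.mul_apply, Fin.sum_univ_two] using hM t 0 j

lemma hasDerivAt_row_one (hM : IsHillSolution q M) (t : ℝ) (j : Fin 2) :
    HasDerivAt (fun s => M s 1 j) (q t * M t 0 j) t := by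
  simpa [Matrix.mul_apply, Fin.sum_univ_two] using hM t 1 j

lemma mul_const (hM : IsHillSolution q M) (A : Matrix (Fin 2) (Fin 2) ℝ) :
    IsHillSolution q fun t => M t * A := fun t i j => by
  rw [← Matrix.mul_assoc, Matrix.mul_apply]
  change HasDerivAt (fun s => ∑ k, M s i k * A k j) _ t
  exact HasDerivAt.fun_sum fun k _ => (hM t i k).mul_const (A k j)

lemma wronskian_eq (hM : IsHillSolution q M) (hN : IsHillSolution p N)
    (hqp : EqOn q p (Icc a b)) (ht : t ∈ Icc a b) (i j : Fin 2) :
    M t 0 i * N t 1 j - M t 1 i * N t 0 j = M a 0 i * N a 1 j - M a 1 i * N a 0 j := by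
  have hW : ∀ s, HasDerivAt (fun s => M s 0 i * N s 1 j - M s 1 i * N s 0 j)
      ((p s - q s) * (M s 0 i * N s 0 j)) s := fun s =>
    (((hM.hasDerivAt_row_zero s i).mul (hN.hasDerivAt_row_one s j)).sub
      ((hM.hasDerivAt_row_one s i).mul (hN.hasDerivAt_row_zero s j))).congr_deriv (by ring)
  refine constant_of_has_deriv_right_zero (fun s _ => (hW s).continuousAt.continuousWithinAt)
    (fun s hs => ?_) t ht
  simpa [hqp (Ico_subset_Icc_self hs)] using (hW s).hasDerivWithinAt (s := Ici s)

lemma adjugate_mul_eq (hM : IsHillSolution q M) (hN : IsHillSolution p N)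
    (hqp : EqOn q p (Icc a b)) (ht : t ∈ Icc a b) :
    (M t).adjugate * N t = (M a).adjugate * N a := by
  have hW := hM.wronskian_eq hN hqp ht
  ext i j
  fin_cases i <;>
    simp only [Matrix.adjugate_fin_two, Matrix.mul_apply, Fin.sum_univ_two, Matrix.of_apply,
      Matrix.cons_val_zero, Matrix.cons_val_one, Fin.zero_eta, Fin.mk_one, Fin.isValue]
  · linear_combination -hW 1 j
  · linear_combination hW 0 j

lemma det_eq (hM : IsHillSolution q M) (s t : ℝ) : (M s).det = (M t).det := by
  wlog hst : t ≤ s generalizing s t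
  · exact (this t s (le_of_not_ge hst)).symm
  have hW := hM.wronskian_eq hM (eqOn_refl q (Icc t s)) ⟨hst, le_rfl⟩ 0 1
  simp only [Matrix.det_fin_two]
  linear_combination hW

lemma eqOn_of_eq (hM : IsHillSolution q M) (hN : IsHillSolution p N)
    (hqp : EqOn q p (Icc a b)) (ha : M a = N a) (hdet : (M a).det ≠ 0) :
    EqOn M N (Icc a b) := fun t ht => by
  have hadj : (M t).adjugate * M t = (M t).adjugate * N t := by
    rw [hM.adjugate_mul_eq hM (eqOn_refl q _) ht, hM.adjugate_mul_eq hN hqp ht, ha]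
  have hsmul : (M t).det • M t = (M t).det • N t := by
    simpa [← Matrix.mul_assoc, Matrix.mul_adjugate] using congrArg (M t * ·) hadj
  rw [hM.det_eq a t] at hdet
  exact smul_right_injective _ hdet hsmul

end IsHillSolution

open scoped Matrix.Norms.Operator in
lemma exists_isHillSolution_const (y t₀ : ℝ) (A : Matrix (Fin 2) (Fin 2) ℝ) :
    ∃ M, IsHillSolution (fun _ => y) M ∧ M t₀ = A ∧ ∀ i j, ContDiff ℝ ω fun t => M t i j := by
  set B : Matrix (Fin 2) (Fin 2) ℝ := !![0, 1; y, 0]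
  let entry (i j : Fin 2) := (Matrix.entryLinearMap ℝ ℝ i j).toContinuousLinearMap
  have hexp : IsHillSolution (fun _ => y) fun t => NormedSpace.exp ((t - t₀) • B) :=
    fun t i j => (entry i j).hasFDerivAt.comp_hasDerivAt t
      ((hasDerivAt_exp_smul_const' B (t - t₀)).comp_sub_const t t₀)
  have hsmooth : ContDiff ℝ ω fun t : ℝ => NormedSpace.exp ((t - t₀) • B) * A :=
    ((contDiff_iff_contDiffAt.2 fun X => (NormedSpace.exp_analytic X).contDiffAt).comp
      (by fun_prop : ContDiff ℝ ω fun t : ℝ => (t - t₀) • B)).mul contDiff_const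
  exact ⟨_, hexp.mul_const A, by simp, fun i j => (entry i j).contDiff.comp hsmooth⟩

end HillEquation

section PolarCoordinates

/-- The Euclidean norm of the first row of a matrix. -/
noncomputable def rowRadius (A : Matrix (Fin 2) (Fin 2) ℝ) : ℝ :=
  √(A 0 0 ^ 2 + A 0 1 ^ 2)

/-- The rate of change of `rowRadius` along a solution of the Hill equation, whose second row is
the derivative of the first. -/
noncomputable def rowRadiusRate (A : Matrix (Fin 2) (Fin 2) ℝ) : ℝ :=
  (A 0 0 * A 1 0 + A 0 1 * A 1 1) / rowRadius A

/-- The potential `q` for which the radius `ρ` solves the Ermakov–Pinney equation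
`ρ'' = q ρ + ρ⁻³`. -/
noncomputable def ermakovPotential (ρ : ℝ → ℝ) (t : ℝ) : ℝ :=
  deriv (deriv ρ) t / ρ t - 1 / ρ t ^ 4

/-- The matrix of determinant `1` whose first row is `r (cos φ, sin φ)` and whose
`rowRadiusRate` is `v`. -/
noncomputable def polarMatrix (r v φ : ℝ) : Matrix (Fin 2) (Fin 2) ℝ :=
  !![r * cos φ, r * sin φ; v * cos φ - sin φ / r, v * sin φ + cos φ / r]

/-- The polar angle swept from time `a` by a first row of radius `ρ`: its speed is `1 / ρ²`
because the Wronskian is `1`. -/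
noncomputable def phase (ρ : ℝ → ℝ) (a t : ℝ) : ℝ := ∫ s in a..t, 1 / ρ s ^ 2

variable {A : Matrix (Fin 2) (Fin 2) ℝ} {q ρ σ θ v : ℝ → ℝ}
  {M : ℝ → Matrix (Fin 2) (Fin 2) ℝ} {s : Set ℝ} {a b r t φ : ℝ}

lemma rowRadius_sq (A : Matrix (Fin 2) (Fin 2) ℝ) : rowRadius A ^ 2 = A 0 0 ^ 2 + A 0 1 ^ 2 :=
  sq_sqrt (by positivity)

lemma row_sq_pos (hA : A.det ≠ 0) : 0 < A 0 0 ^ 2 + A 0 1 ^ 2 := by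
  rw [Matrix.det_fin_two] at hA
  by_contra! h
  have h₀ : A 0 0 = 0 := by nlinarith [sq_nonneg (A 0 0), sq_nonneg (A 0 1)]
  have h₁ : A 0 1 = 0 := by nlinarith [sq_nonneg (A 0 0), sq_nonneg (A 0 1)]
  simp [h₀, h₁] at hA

lemma rowRadius_pos (hA : A.det ≠ 0) : 0 < rowRadius A := sqrt_pos.2 (row_sq_pos hA)

@[simp] lemma rowRadius_one : rowRadius 1 = 1 := by simp [rowRadius]

@[simp] lemma rowRadiusRate_one : rowRadiusRate 1 = 0 := by simp [rowRadiusRate]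

lemma IsHillSolution.hasDerivAt_rowRadius (hM : IsHillSolution q M) (hdet : (M t).det ≠ 0) :
    HasDerivAt (fun s => rowRadius (M s)) (rowRadiusRate (M t)) t := by
  refine ((((hM.hasDerivAt_row_zero t 0).pow 2).add
    ((hM.hasDerivAt_row_zero t 1).pow 2)).sqrt (row_sq_pos hdet).ne').congr_deriv ?_
  change _ / (2 * rowRadius (M t)) = _
  have := (rowRadius_pos hdet).ne'
  simp only [rowRadiusRate]
  field_simp
  ring

lemma IsHillSolution.hasDerivAt_rowRadiusRate (hM : IsHillSolution q M) (hdet : (M t).det ≠ 0) :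
    HasDerivAt (fun s => rowRadiusRate (M s))
      (q t * rowRadius (M t) + (M t).det ^ 2 / rowRadius (M t) ^ 3) t := by
  have hr := (rowRadius_pos hdet).ne'
  refine ((((hM.hasDerivAt_row_zero t 0).fun_mul (hM.hasDerivAt_row_one t 0)).fun_add
    ((hM.hasDerivAt_row_zero t 1).fun_mul (hM.hasDerivAt_row_one t 1))).div
    (hM.hasDerivAt_rowRadius hdet) hr).congr_deriv ?_
  have hsq := rowRadius_sq (M t)
  simp only [rowRadiusRate, Matrix.det_fin_two]
  generalize rowRadius (M t) = r at *
  field_simp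
  linear_combination (M t 1 0 ^ 2 + M t 1 1 ^ 2 - q t * r ^ 2) * hsq

lemma IsHillSolution.ermakovPotential_rowRadius (hM : IsHillSolution q M)
    (hdet : ∀ t, (M t).det = 1) : ermakovPotential (fun t => rowRadius (M t)) = q := by
  have hne : ∀ t, (M t).det ≠ 0 := fun t => by simp [hdet t]
  have hderiv : deriv (fun t => rowRadius (M t)) = fun t => rowRadiusRate (M t) :=
    funext fun t => (hM.hasDerivAt_rowRadius (hne t)).deriv
  funext t
  have := (rowRadius_pos (hne t)).ne'
  rw [ermakovPotential, hderiv, (hM.hasDerivAt_rowRadiusRate (hne t)).deriv, hdet]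
  field_simp
  ring

lemma exists_ermakovPotential_eq_const (y t₀ : ℝ) (hA : A.det = 1) :
    ∃ ρ : ℝ → ℝ, ContDiff ℝ ω ρ ∧ (∀ t, 0 < ρ t) ∧ ermakovPotential ρ = (fun _ => y) ∧
      ρ t₀ = rowRadius A ∧ deriv ρ t₀ = rowRadiusRate A := by
  obtain ⟨M, hM, rfl, hsmooth⟩ := exists_isHillSolution_const y t₀ A
  have hdet : ∀ t, (M t).det = 1 := fun t => (hM.det_eq t t₀).trans hA
  have hne : ∀ t, (M t).det ≠ 0 := fun t => by simp [hdet t]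
  exact ⟨fun t => rowRadius (M t),
    (((hsmooth 0 0).pow 2).add ((hsmooth 0 1).pow 2)).sqrt fun t => (row_sq_pos (hne t)).ne',
    fun t => rowRadius_pos (hne t), hM.ermakovPotential_rowRadius hdet, rfl,
    (hM.hasDerivAt_rowRadius (hne t₀)).deriv⟩

lemma contDiffAt_ermakovPotential {n : WithTop ℕ∞} (hρ : ContDiffAt ℝ (n + 2) ρ t)
    (h0 : ρ t ≠ 0) : ContDiffAt ℝ n (ermakovPotential ρ) t := by
  have hρ' : ContDiffAt ℝ (n + 1) (deriv ρ) t := hρ.derivWithin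
    (by rw [add_assoc, one_add_one_eq_two])
  have hρ₀ : ContDiffAt ℝ n ρ t := hρ.of_le le_self_add
  exact ((hρ'.derivWithin le_rfl).div hρ₀ h0).sub
    (contDiffAt_const.div (hρ₀.pow 4) (pow_ne_zero 4 h0))

lemma contDiff_ermakovPotential {n : WithTop ℕ∞} (hρ : ContDiff ℝ (n + 2) ρ)
    (h0 : ∀ t, ρ t ≠ 0) : ContDiff ℝ n (ermakovPotential ρ) :=
  contDiff_iff_contDiffAt.2 fun t => contDiffAt_ermakovPotential hρ.contDiffAt (h0 t)

lemma eqOn_deriv_of_uniqueDiffOn (hs : UniqueDiffOn ℝ s) (hρσ : EqOn ρ σ s)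
    (hρ : Differentiable ℝ ρ) (hσ : Differentiable ℝ σ) : EqOn (deriv ρ) (deriv σ) s :=
  fun t ht => by
    rw [← (hρ t).derivWithin (hs t ht), ← (hσ t).derivWithin (hs t ht),
      derivWithin_congr hρσ (hρσ ht)]

lemma eqOn_ermakovPotential (hs : UniqueDiffOn ℝ s) (hρσ : EqOn ρ σ s)
    (hρ : ContDiff ℝ 2 ρ) (hσ : ContDiff ℝ 2 σ) :
    EqOn (ermakovPotential ρ) (ermakovPotential σ) s := by
  have h₁ := eqOn_deriv_of_uniqueDiffOn hs hρσ (hρ.differentiable two_ne_zero)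
    (hσ.differentiable two_ne_zero)
  have h₂ := eqOn_deriv_of_uniqueDiffOn hs h₁ ((hρ.deriv' (n := 1)).differentiable one_ne_zero)
    ((hσ.deriv' (n := 1)).differentiable one_ne_zero)
  intro t ht
  rw [ermakovPotential, ermakovPotential, h₂ ht, hρσ ht]

lemma det_polarMatrix (hr : r ≠ 0) (v φ : ℝ) : (polarMatrix r v φ).det = 1 := by
  simp only [polarMatrix, Matrix.det_fin_two_of]
  field_simp
  linear_combination sin_sq_add_cos_sq φ

lemma rowRadius_polarMatrix (hr : 0 ≤ r) (v φ : ℝ) : rowRadius (polarMatrix r v φ) = r := by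
  have : (r * cos φ) ^ 2 + (r * sin φ) ^ 2 = r ^ 2 := by
    linear_combination r ^ 2 * sin_sq_add_cos_sq φ
  simp [rowRadius, polarMatrix, this, sqrt_sq hr]

lemma eq_polarMatrix (hA : A.det = 1) (hr : 0 < r) (h₀ : A 0 0 = r * cos φ)
    (h₁ : A 0 1 = r * sin φ) : A = polarMatrix (rowRadius A) (rowRadiusRate A) φ := by
  have hsc := sin_sq_add_cos_sq φ
  have hrad : rowRadius A = r := by
    have hsq : A 0 0 ^ 2 + A 0 1 ^ 2 = r ^ 2 := by
      rw [h₀, h₁]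
      linear_combination r ^ 2 * hsc
    rw [rowRadius, hsq, sqrt_sq hr.le]
  rw [Matrix.det_fin_two, h₀, h₁] at hA
  have h₁₀ : A 1 0 = rowRadiusRate A * cos φ - sin φ / r := by
    rw [rowRadiusRate, hrad, h₀, h₁]
    field_simp
    linear_combination -sin φ * hA - r * A 1 0 * hsc
  have h₁₁ : A 1 1 = rowRadiusRate A * sin φ + cos φ / r := by
    rw [rowRadiusRate, hrad, h₀, h₁]
    field_simp
    linear_combination cos φ * hA - r * A 1 1 * hsc
  rw [polarMatrix, hrad, ← h₀, ← h₁, ← h₁₀, ← h₁₁]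
  exact Matrix.eta_fin_two A

lemma polarMatrix_one_zero_zero : polarMatrix 1 0 0 = 1 := by
  simp [polarMatrix, Matrix.one_fin_two]

lemma isHillSolution_polarMatrix (hρ : ContDiff ℝ 2 ρ) (h0 : ∀ t, ρ t ≠ 0)
    (hθ : ∀ t, HasDerivAt θ (1 / ρ t ^ 2) t) :
    IsHillSolution (ermakovPotential ρ) fun t => polarMatrix (ρ t) (deriv ρ t) (θ t) := by
  intro t i j
  have hρ₁ : HasDerivAt ρ (deriv ρ t) t := (hρ.differentiable two_ne_zero t).hasDerivAt
  have hρ₂ : HasDerivAt (deriv ρ) (deriv (deriv ρ) t) t :=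
    ((hρ.deriv' (n := 1)).differentiable one_ne_zero t).hasDerivAt
  have h := h0 t
  have h₀₀ : HasDerivAt (fun s => ρ s * cos (θ s)) (deriv ρ t * cos (θ t) - sin (θ t) / ρ t) t :=
    (hρ₁.mul (hθ t).cos).congr_deriv (by field_simp; ring)
  have h₀₁ : HasDerivAt (fun s => ρ s * sin (θ s)) (deriv ρ t * sin (θ t) + cos (θ t) / ρ t) t :=
    (hρ₁.mul (hθ t).sin).congr_deriv (by field_simp)
  have h₁₀ : HasDerivAt (fun s => deriv ρ s * cos (θ s) - sin (θ s) / ρ s)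
      (ermakovPotential ρ t * (ρ t * cos (θ t))) t :=
    ((hρ₂.mul (hθ t).cos).sub ((hθ t).sin.div hρ₁ h)).congr_deriv
      (by rw [ermakovPotential]; field_simp; ring)
  have h₁₁ : HasDerivAt (fun s => deriv ρ s * sin (θ s) + cos (θ s) / ρ s)
      (ermakovPotential ρ t * (ρ t * sin (θ t))) t :=
    ((hρ₂.mul (hθ t).sin).add ((hθ t).cos.div hρ₁ h)).congr_deriv
      (by rw [ermakovPotential]; field_simp; ring)
  fin_cases i <;> fin_cases j
  · simpa [polarMatrix] using h₀₀
  · simpa [polarMatrix] using h₀₁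
  · simpa [polarMatrix] using h₁₀
  · simpa [polarMatrix] using h₁₁

lemma isArgLift_polarMatrix (hρ : ∀ t, 0 ≤ ρ t) (hθ : ContinuousOn θ (Icc 0 (2 * π)))
    (hθ₀ : θ 0 = 0) : IsArgLift (fun t => polarMatrix (ρ t) (v t) (θ t)) θ := by
  refine ⟨hθ, hθ₀, fun t _ => ?_⟩
  have hrad : √(polarMatrix (ρ t) (v t) (θ t) 0 0 ^ 2 + polarMatrix (ρ t) (v t) (θ t) 0 1 ^ 2) =
      ρ t := rowRadius_polarMatrix (hρ t) (v t) (θ t)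
  simp only [hrad]
  simp [polarMatrix]

lemma hasDerivAt_phase (hρ : Continuous ρ) (h0 : ∀ t, ρ t ≠ 0) (a t : ℝ) :
    HasDerivAt (phase ρ a) (1 / ρ t ^ 2) t :=
  (continuous_const.div (hρ.pow 2) fun s => pow_ne_zero 2 (h0 s)).integral_hasStrictDerivAt a t
    |>.hasDerivAt

@[simp] lemma phase_self (ρ : ℝ → ℝ) (a : ℝ) : phase ρ a a = 0 := intervalIntegral.integral_same

lemma eqOn_of_eqOn_ermakovPotential (hρ : ContDiff ℝ 2 ρ) (hσ : ContDiff ℝ 2 σ)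
    (hρ₀ : ∀ t, 0 < ρ t) (hσ₀ : ∀ t, 0 < σ t)
    (hpot : EqOn (ermakovPotential ρ) (ermakovPotential σ) (Icc a b))
    (ha : ρ a = σ a) (ha' : deriv ρ a = deriv σ a) : EqOn ρ σ (Icc a b) := by
  have hM := isHillSolution_polarMatrix hρ (fun t => (hρ₀ t).ne')
    (hasDerivAt_phase hρ.continuous (fun t => (hρ₀ t).ne') a)
  have hN := isHillSolution_polarMatrix hσ (fun t => (hσ₀ t).ne')
    (hasDerivAt_phase hσ.continuous (fun t => (hσ₀ t).ne') a)
  have hMN := hM.eqOn_of_eq hN hpot (by simp [ha, ha'])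
    (by simp [det_polarMatrix (hρ₀ a).ne'])
  intro t ht
  simpa only [rowRadius_polarMatrix (hρ₀ t).le, rowRadius_polarMatrix (hσ₀ t).le] using
    congrArg rowRadius (hMN ht)

end PolarCoordinates

section Analyticity

lemma eqOn_const_of_iteratedDeriv_eq_zero {f : ℝ → ℝ} {U : Set ℝ} {x : ℝ}
    (hf : AnalyticOnNhd ℝ f U) (hU : IsPreconnected U) (hx : x ∈ U)
    (hflat : ∀ k : ℕ, 1 ≤ k → iteratedDeriv k f x = 0) : EqOn f (fun _ => f x) U := by
  have hderiv : deriv (fun t => f t - f x) = deriv f := funext fun _ => deriv_sub_const (f x)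
  have horder : analyticOrderAt (fun t => f t - f x) x = ⊤ := by
    refine ENat.eq_top_iff_forall_ge.2 fun m =>
      (natCast_le_analyticOrderAt_iff_iteratedDeriv_eq_zero
        ((hf x hx).fun_sub analyticAt_const)).2 fun k _ => ?_
    rcases k with _ | k
    · simp
    · rw [iteratedDeriv_succ', hderiv, ← iteratedDeriv_succ']
      exact hflat _ k.succ_pos
  refine hf.eqOn_of_preconnected_of_eventuallyEq analyticOnNhd_const hU hx ?_
  filter_upwards [analyticOrderAt_eq_top.1 horder] with t ht using sub_eq_zero.1 ht

lemma contDiffAt_omega_expNegInvGlue {x : ℝ} (hx : 0 < x) : ContDiffAt ℝ ω expNegInvGlue x := by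
  have hexp : ContDiffAt ℝ ω (fun z : ℝ => exp (-z⁻¹)) x := (contDiffAt_inv ℝ hx.ne').neg.exp
  refine hexp.congr_of_eventuallyEq ?_
  filter_upwards [lt_mem_nhds hx] with z hz
  simp [expNegInvGlue, hz.not_ge]

lemma contDiffAt_omega_smoothTransition {x : ℝ} (hx : x ∈ Ioo (0 : ℝ) 1) :
    ContDiffAt ℝ ω smoothTransition x := by
  have h₀ := contDiffAt_omega_expNegInvGlue hx.1
  have h₁ : ContDiffAt ℝ ω (fun z => expNegInvGlue (1 - z)) x :=
    (contDiffAt_omega_expNegInvGlue (sub_pos.2 hx.2)).comp x (contDiffAt_const.sub contDiffAt_id)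
  exact h₀.div (h₀.add h₁) (smoothTransition.pos_denom x).ne'

end Analyticity

section Gluing

/-- The smooth transition from `0` to `1` across the interval `[c, d]`. -/
noncomputable def ramp (c d t : ℝ) : ℝ := smoothTransition ((t - c) / (d - c))

/-- A smooth bump supported on `[c, d]`, analytic and positive inside. -/
noncomputable def rampBump (c d t : ℝ) : ℝ := ramp c d t * (1 - ramp c d t)

/-- A transition from `f` to `g` across `[c, d]`, whose values inside tend to `0` as the damping
rate `n` grows. -/
noncomputable def dampedCrossfade (f g : ℝ → ℝ) (c d n t : ℝ) : ℝ :=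
  ((1 - ramp c d t) * f t + ramp c d t * g t) * exp (-(n * rampBump c d t))

variable {a b c d n t α m : ℝ} {f g : ℝ → ℝ}

lemma ramp_of_le (hcd : c < d) (ht : t ≤ c) : ramp c d t = 0 :=
  smoothTransition.zero_of_nonpos (div_nonpos_of_nonpos_of_nonneg (by linarith) (by linarith))

lemma ramp_of_ge (hcd : c < d) (ht : d ≤ t) : ramp c d t = 1 :=
  smoothTransition.one_of_one_le ((one_le_div (by linarith)).2 (by linarith))

lemma rescale_mem_Ioo (ht : t ∈ Ioo c d) : (t - c) / (d - c) ∈ Ioo (0 : ℝ) 1 := by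
  have hcd : 0 < d - c := by linarith [ht.1, ht.2]
  exact ⟨div_pos (by linarith [ht.1]) hcd, (div_lt_one hcd).2 (by linarith [ht.2])⟩

lemma ramp_mem_Icc (c d t : ℝ) : ramp c d t ∈ Icc (0 : ℝ) 1 :=
  ⟨smoothTransition.nonneg _, smoothTransition.le_one _⟩

lemma contDiff_ramp (c d : ℝ) : ContDiff ℝ ∞ (ramp c d) :=
  smoothTransition.contDiff.comp (by fun_prop)

lemma contDiffAt_omega_ramp (ht : t ∈ Ioo c d) : ContDiffAt ℝ ω (ramp c d) t :=
  (contDiffAt_omega_smoothTransition (rescale_mem_Ioo ht)).comp t (by fun_prop)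

lemma rampBump_nonneg (c d t : ℝ) : 0 ≤ rampBump c d t :=
  mul_nonneg (ramp_mem_Icc c d t).1 (sub_nonneg.2 (ramp_mem_Icc c d t).2)

lemma rampBump_pos (ht : t ∈ Ioo c d) : 0 < rampBump c d t :=
  mul_pos (smoothTransition.pos_of_pos (rescale_mem_Ioo ht).1)
    (sub_pos.2 (smoothTransition.lt_one_of_lt_one (rescale_mem_Ioo ht).2))

lemma rampBump_of_le (hcd : c < d) (ht : t ≤ c) : rampBump c d t = 0 := by
  simp [rampBump, ramp_of_le hcd ht]

lemma rampBump_of_ge (hcd : c < d) (ht : d ≤ t) : rampBump c d t = 0 := by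
  simp [rampBump, ramp_of_ge hcd ht]

lemma contDiffAt_rampBump {k : WithTop ℕ∞} (h : ContDiffAt ℝ k (ramp c d) t) :
    ContDiffAt ℝ k (rampBump c d) t := h.mul (contDiffAt_const.sub h)

lemma continuous_rampBump (c d : ℝ) : Continuous (rampBump c d) :=
  continuous_iff_continuousAt.2 fun _ =>
    (contDiffAt_rampBump (contDiff_ramp c d).contDiffAt).continuousAt

lemma dampedCrossfade_of_le (hcd : c < d) (ht : t ≤ c) : dampedCrossfade f g c d n t = f t := by
  simp [dampedCrossfade, rampBump_of_le hcd ht, ramp_of_le hcd ht]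

lemma dampedCrossfade_of_ge (hcd : c < d) (ht : d ≤ t) : dampedCrossfade f g c d n t = g t := by
  simp [dampedCrossfade, rampBump_of_ge hcd ht, ramp_of_ge hcd ht]

lemma dampedCrossfade_pos (hf : 0 < f t) (hg : 0 < g t) : 0 < dampedCrossfade f g c d n t := by
  refine mul_pos ?_ (exp_pos _)
  obtain ⟨h₀, h₁⟩ := ramp_mem_Icc c d t
  nlinarith [mul_nonneg (sub_nonneg.2 h₁) hf.le, mul_nonneg h₀ hg.le]

lemma dampedCrossfade_le_add (hf : 0 ≤ f t) (hg : 0 ≤ g t) (hn : 0 ≤ n) :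
    dampedCrossfade f g c d n t ≤ f t + g t := by
  obtain ⟨h₀, h₁⟩ := ramp_mem_Icc c d t
  have hexp : exp (-(n * rampBump c d t)) ≤ 1 :=
    exp_le_one_iff.2 (neg_nonpos.2 (mul_nonneg hn (rampBump_nonneg c d t)))
  calc dampedCrossfade f g c d n t
      ≤ ((1 - ramp c d t) * f t + ramp c d t * g t) * 1 := by
        unfold dampedCrossfade
        have := sub_nonneg.2 h₁
        gcongr
    _ ≤ f t + g t := by nlinarith

lemma contDiffAt_dampedCrossfade {k : WithTop ℕ∞} (hf : ContDiffAt ℝ k f t)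
    (hg : ContDiffAt ℝ k g t) (h : ContDiffAt ℝ k (ramp c d) t) :
    ContDiffAt ℝ k (dampedCrossfade f g c d n) t :=
  (((contDiffAt_const.sub h).mul hf).add (h.mul hg)).mul
    (contDiffAt_const.mul (contDiffAt_rampBump h)).neg.exp

lemma continuous_dampedCrossfade (hf : Continuous f) (hg : Continuous g) (c d n : ℝ) :
    Continuous (dampedCrossfade f g c d n) := by
  have hramp := (contDiff_ramp c d).continuous
  have hbump := continuous_rampBump c d
  unfold dampedCrossfade
  fun_prop

open Filter Topology in
lemma tendsto_dampedCrossfade_zero (f g : ℝ → ℝ) (ht : t ∈ Ioo a b) :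
    Tendsto (fun ε => dampedCrossfade f g (a + ε) (b - ε) ε⁻¹ t) (𝓝[>] 0) (𝓝 0) := by
  have hab : b - a ≠ 0 := by linarith [ht.1, ht.2]
  have hramp : Tendsto (fun ε => ramp (a + ε) (b - ε) t) (𝓝[>] 0) (𝓝 (ramp a b t)) := by
    have hcont : ContinuousAt (fun ε => ramp (a + ε) (b - ε) t) 0 := by
      unfold ramp
      fun_prop (disch := simpa)
    simpa using hcont.tendsto.mono_left nhdsWithin_le_nhds
  have hexponent : Tendsto (fun ε => ε⁻¹ * rampBump (a + ε) (b - ε) t) (𝓝[>] 0) atTop :=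
    tendsto_inv_nhdsGT_zero.atTop_mul_pos (rampBump_pos ht) (hramp.mul (hramp.const_sub 1))
  have hmix := ((hramp.const_sub 1).mul_const (f t)).add (hramp.mul_const (g t))
  simpa only [dampedCrossfade, Function.comp_def, mul_zero] using
    hmix.mul (tendsto_exp_neg_atTop_nhds_zero.comp hexponent)

open Filter Topology in
lemma exists_integral_dampedCrossfade_lt (hf : Continuous f) (hg : Continuous g)
    (hf₀ : ∀ t, 0 < f t) (hg₀ : ∀ t, 0 < g t) (hab : a < b) (hα : 0 < α) :
    ∃ ε, 0 < ε ∧ ε < (b - a) / 2 ∧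
      ∫ t in a..b, dampedCrossfade f g (a + ε) (b - ε) ε⁻¹ t < α := by
  have hlim : Tendsto (fun ε => ∫ t in a..b, dampedCrossfade f g (a + ε) (b - ε) ε⁻¹ t)
      (𝓝[>] 0) (𝓝 (∫ _ in a..b, (0 : ℝ))) := by
    refine intervalIntegral.tendsto_integral_filter_of_dominated_convergence
      (fun t => f t + g t) ?_ ?_ ((hf.add hg).intervalIntegrable a b) ?_
    · exact .of_forall fun ε => (continuous_dampedCrossfade hf hg _ _ _).aestronglyMeasurable
    · filter_upwards [self_mem_nhdsWithin] with ε hε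
      refine .of_forall fun t _ => ?_
      rw [norm_of_nonneg (dampedCrossfade_pos (hf₀ t) (hg₀ t)).le]
      exact dampedCrossfade_le_add (hf₀ t).le (hg₀ t).le (inv_nonneg.2 (le_of_lt hε))
    · filter_upwards [MeasureTheory.Measure.ae_ne MeasureTheory.volume b] with t htb ht
      rw [uIoc_of_le hab.le] at ht
      exact tendsto_dampedCrossfade_zero f g ⟨ht.1, lt_of_le_of_ne ht.2 htb⟩
  rw [intervalIntegral.integral_zero] at hlim
  have hsmall : ∀ᶠ ε in 𝓝[>] (0 : ℝ), ε < (b - a) / 2 :=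
    mem_nhdsWithin_of_mem_nhds (Iio_mem_nhds (by linarith))
  have hpos : ∀ᶠ ε in 𝓝[>] (0 : ℝ), 0 < ε := eventually_mem_nhdsWithin
  obtain ⟨ε, hε, hεab, hint⟩ :=
    (hpos.and (hsmall.and (hlim.eventually_lt_const hα))).exists
  exact ⟨ε, hε, hεab, hint⟩

lemma exists_integral_mul_rampBump_eq (hf : Continuous f) (hf₀ : ∀ t, 0 < f t) (hac : a ≤ c)
    (hcd : c < d) (hdb : d ≤ b) (hm : 0 < m) :
    ∃ k, 0 < k ∧ ∫ t in a..b, k * (f t * rampBump c d t) = m := by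
  have hcont : Continuous fun t => f t * rampBump c d t := hf.mul (continuous_rampBump c d)
  obtain ⟨x, hx⟩ := nonempty_Ioo.2 hcd
  have hJ : 0 < ∫ t in a..b, f t * rampBump c d t :=
    intervalIntegral.integral_pos (by linarith) hcont.continuousOn
      (fun t _ => mul_nonneg (hf₀ t).le (rampBump_nonneg c d t))
      ⟨x, ⟨by linarith [hx.1], by linarith [hx.2]⟩, mul_pos (hf₀ x) (rampBump_pos hx)⟩
  exact ⟨m / ∫ t in a..b, f t * rampBump c d t, div_pos hm hJ, by
    rw [intervalIntegral.integral_const_mul, div_mul_cancel₀ m hJ.ne']⟩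

lemma exists_bump_integral_eq_ne (f : ℝ → ℝ) (hac : a ≤ c) (hcd : c < d) (hdb : d ≤ b)
    (hm : 0 < m) :
    ∃ h : ℝ → ℝ, ContDiff ℝ ω h ∧ (∀ t, 0 < h t) ∧ ∫ t in a..b, h t * rampBump c d t = m ∧
      ∃ t ∈ Ioo c d, h t * rampBump c d t ≠ f t := by
  -- The constant and the exponential profiles cannot both agree with `f`.
  obtain ⟨k, hk, hkm⟩ :=
    exists_integral_mul_rampBump_eq continuous_const (fun _ => one_pos) hac hcd hdb hm
  obtain ⟨l, hl, hlm⟩ := exists_integral_mul_rampBump_eq continuous_exp exp_pos hac hcd hdb hm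
  by_cases hne : ∃ t ∈ Ioo c d, k * rampBump c d t ≠ f t
  · exact ⟨fun _ => k, contDiff_const, fun _ => hk, by simpa using hkm, hne⟩
  push Not at hne
  obtain ⟨t, ht, htlog⟩ := (Ioo_infinite hcd).nontrivial.exists_ne (log (k / l))
  refine ⟨fun t => l * exp t, contDiff_const.mul contDiff_exp, fun t => mul_pos hl (exp_pos t),
    by simpa only [mul_assoc] using hlm, t, ht, fun heq => htlog ?_⟩
  have hlk : l * exp t = k := mul_right_cancel₀ (rampBump_pos ht).ne' (heq.trans (hne t ht).symm)
  rw [← hlk, mul_div_cancel_left₀ _ hl.ne', log_exp]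

lemma exists_glued_integral_eq (hf : ContDiff ℝ ω f) (hg : ContDiff ℝ ω g)
    (hf₀ : ∀ t, 0 < f t) (hg₀ : ∀ t, 0 < g t) (hab : a < b) (hα : 0 < α) :
    ∃ ε, 0 < ε ∧ ε < (b - a) / 2 ∧ ∃ s : ℝ → ℝ, ContDiff ℝ ∞ s ∧ (∀ t, 0 < s t) ∧
      EqOn s f (Iic (a + ε)) ∧ EqOn s g (Ici (b - ε)) ∧
      (∀ t ∈ Ioo (a + ε) (b - ε), ContDiffAt ℝ ω s t) ∧ ∫ t in a..b, s t = α ∧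
      ∃ t ∈ Ioo (a + ε) (b - ε), s t ≠ f t := by
  obtain ⟨ε, hε, hεab, hlt⟩ :=
    exists_integral_dampedCrossfade_lt hf.continuous hg.continuous hf₀ hg₀ hab hα
  set c := a + ε
  set d := b - ε
  set base := dampedCrossfade f g c d ε⁻¹
  have hcd : c < d := by grind
  obtain ⟨h, hh, hh₀, hint, x, hx, hne⟩ := exists_bump_integral_eq_ne (fun t => f t - base t)
    (by grind : a ≤ c) hcd (by grind : d ≤ b) (sub_pos.2 hlt)
  have hsmooth {n : WithTop ℕ∞} {t : ℝ} (hramp : ContDiffAt ℝ n (ramp c d) t) :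
      ContDiffAt ℝ n (fun t => base t + h t * rampBump c d t) t :=
    (contDiffAt_dampedCrossfade (hf.of_le le_top).contDiffAt (hg.of_le le_top).contDiffAt
      hramp).add ((hh.of_le le_top).contDiffAt.mul (contDiffAt_rampBump hramp))
  refine ⟨ε, hε, hεab, fun t => base t + h t * rampBump c d t,
    contDiff_iff_contDiffAt.2 fun _ => hsmooth (contDiff_ramp c d).contDiffAt,
    fun t => add_pos_of_pos_of_nonneg (dampedCrossfade_pos (hf₀ t) (hg₀ t))
      (mul_nonneg (hh₀ t).le (rampBump_nonneg c d t)),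
    fun t ht => ?_, fun t ht => ?_, fun t ht => hsmooth (contDiffAt_omega_ramp ht), ?_,
    x, hx, fun heq => hne (eq_sub_of_add_eq' heq)⟩
  · simp [base, dampedCrossfade_of_le hcd ht, rampBump_of_le hcd ht]
  · simp [base, dampedCrossfade_of_ge hcd ht, rampBump_of_ge hcd ht]
  · have hbase := continuous_dampedCrossfade hf.continuous hg.continuous c d ε⁻¹
    have hbump := hh.continuous.mul (continuous_rampBump c d)
    calc ∫ t in a..b, base t + h t * rampBump c d t
        = (∫ t in a..b, base t) + ∫ t in a..b, h t * rampBump c d t :=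
          intervalIntegral.integral_add (hbase.intervalIntegrable a b)
            (hbump.intervalIntegrable a b)
      _ = α := by rw [hint, add_sub_cancel]

lemma exists_glued_phase_eq {P Q : ℝ → ℝ} (hP : ContDiff ℝ ω P) (hQ : ContDiff ℝ ω Q)
    (hP₀ : ∀ t, 0 < P t) (hQ₀ : ∀ t, 0 < Q t) (hab : a < b) (hα : 0 < α) :
    ∃ ε, 0 < ε ∧ ε < (b - a) / 2 ∧ ∃ ρ : ℝ → ℝ, ContDiff ℝ ∞ ρ ∧ (∀ t, 0 < ρ t) ∧
      EqOn ρ P (Iic (a + ε)) ∧ EqOn ρ Q (Ici (b - ε)) ∧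
      (∀ t ∈ Ioo (a + ε) (b - ε), ContDiffAt ℝ ω ρ t) ∧ phase ρ a b = α ∧
      ∃ t ∈ Ioo (a + ε) (b - ε), ρ t ≠ P t := by
  have hspeed {R : ℝ → ℝ} (hR : ContDiff ℝ ω R) (hR₀ : ∀ t, 0 < R t) :
      ContDiff ℝ ω (fun t => 1 / R t ^ 2) ∧ ∀ t, 0 < 1 / R t ^ 2 :=
    ⟨contDiff_const.div (hR.pow 2) fun t => (pow_pos (hR₀ t) 2).ne',
      fun t => one_div_pos.2 (pow_pos (hR₀ t) 2)⟩
  have hradius {r : ℝ} (hr : 0 < r) : 1 / √(1 / r ^ 2) = r := by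
    rw [sqrt_div' _ (sq_nonneg r), sqrt_sq hr.le, sqrt_one, one_div_one_div]
  obtain ⟨ε, hε, hεab, s, hs, hs₀, hsP, hsQ, hsω, hint, x, hx, hne⟩ :=
    exists_glued_integral_eq (hspeed hP hP₀).1 (hspeed hQ hQ₀).1 (hspeed hP hP₀).2
      (hspeed hQ hQ₀).2 hab hα
  have hsq (t : ℝ) : 1 / (1 / √(s t)) ^ 2 = s t := by
    rw [_root_.one_div_pow, sq_sqrt (hs₀ t).le, one_div_one_div]
  have hsmooth {n : WithTop ℕ∞} {t : ℝ} (h : ContDiffAt ℝ n s t) :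
      ContDiffAt ℝ n (fun t => 1 / √(s t)) t :=
    contDiffAt_const.div (h.sqrt (hs₀ t).ne') (sqrt_pos.2 (hs₀ t)).ne'
  exact ⟨ε, hε, hεab, fun t => 1 / √(s t),
    contDiff_iff_contDiffAt.2 fun t => hsmooth hs.contDiffAt,
    fun t => one_div_pos.2 (sqrt_pos.2 (hs₀ t)),
    fun t ht => by simp only [hsP ht, hradius (hP₀ t)],
    fun t ht => by simp only [hsQ ht, hradius (hQ₀ t)],
    fun t ht => hsmooth (hsω t ht), by simpa only [phase, hsq] using hint,
    x, hx, fun heq => hne (by rw [← heq, hsq])⟩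

end Gluing

section Realization

variable {A : Matrix (Fin 2) (Fin 2) ℝ} {ρ σ : ℝ → ℝ} {a b x y α : ℝ}

lemma exists_isFundMatrix_isArgLift (hA : A.det = 1)
    (hrow : ∃ r : ℝ, 0 < r ∧ A 0 0 = r * cos α ∧ A 0 1 = r * sin α)
    (hρ : ContDiff ℝ 2 ρ) (hρ₀ : ∀ t, 0 < ρ t) (hinit : ρ 0 = 1) (hinit' : deriv ρ 0 = 0)
    (hend : ρ (2 * π) = rowRadius A) (hend' : deriv ρ (2 * π) = rowRadiusRate A)
    (hα : phase ρ 0 (2 * π) = α) :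
    ∃ Φ θ, IsFundMatrix (ermakovPotential ρ) Φ ∧ IsArgLift Φ θ ∧ Φ (2 * π) = A ∧
      θ (2 * π) = α := by
  have hθ := hasDerivAt_phase hρ.continuous (fun t => (hρ₀ t).ne') 0
  obtain ⟨r, hr, hcos, hsin⟩ := hrow
  refine ⟨fun t => polarMatrix (ρ t) (deriv ρ t) (phase ρ 0 t), phase ρ 0,
    ⟨?_, isHillSolution_polarMatrix hρ (fun t => (hρ₀ t).ne') hθ⟩,
    isArgLift_polarMatrix (fun t => (hρ₀ t).le)
      (fun t _ => (hθ t).continuousAt.continuousWithinAt) (phase_self ρ 0), ?_, hα⟩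
  · simp only [hinit, hinit', phase_self, polarMatrix_one_zero_zero]
  · simp only [hend, hend', hα, ← eq_polarMatrix hA hr hcos hsin]

lemma exists_iteratedDeriv_ermakovPotential_ne_zero (hρ : ContDiff ℝ 2 ρ) (hρ₀ : ∀ t, 0 < ρ t)
    (hρω : ∀ t ∈ Ioo a b, ContDiffAt ℝ ω ρ t) (hσ : ContDiff ℝ 2 σ) (hσ₀ : ∀ t, 0 < σ t)
    (hσy : ermakovPotential σ = fun _ => y) (hleft : EqOn ρ σ (Iic a))
    (hne : ∃ t ∈ Ioo a b, ρ t ≠ σ t) (hx : x ∈ Ioo a b) :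
    ∃ k : ℕ, 1 ≤ k ∧ iteratedDeriv k (ermakovPotential ρ) x ≠ 0 := by
  by_contra! hflat
  obtain ⟨t, ht, hne⟩ := hne
  have hab : a < b := hx.1.trans hx.2
  have hconst : EqOn (ermakovPotential ρ) (fun _ => ermakovPotential ρ x) (Ioo a b) :=
    eqOn_const_of_iteratedDeriv_eq_zero
      (fun s hs => (contDiffAt_ermakovPotential (n := ω) (hρω s hs) (hρ₀ s).ne').analyticAt)
      isPreconnected_Ioo hx hflat
  have hcont : Continuous (ermakovPotential ρ) :=
    (contDiff_ermakovPotential (n := 0) (by simpa using hρ) fun t => (hρ₀ t).ne').continuous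
  have hconst' := hconst.closure hcont continuous_const
  rw [closure_Ioo hab.ne] at hconst'
  have hy : ermakovPotential ρ a = y := by
    rw [eqOn_ermakovPotential (uniqueDiffOn_Iic a) hleft hρ hσ self_mem_Iic, hσy]
  have hpot : EqOn (ermakovPotential ρ) (ermakovPotential σ) (Icc a b) := fun s hs => by
    rw [hconst' hs, hσy, ← hy, hconst' (left_mem_Icc.2 hab.le)]
  have hleft' := eqOn_deriv_of_uniqueDiffOn (uniqueDiffOn_Iic a) hleft
    (hρ.differentiable two_ne_zero) (hσ.differentiable two_ne_zero)
  exact hne (eqOn_of_eqOn_ermakovPotential hρ hσ hρ₀ hσ₀ hpot (hleft self_mem_Iic)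
    (hleft' self_mem_Iic) (Ioo_subset_Icc_self ht))

end Realization

/-- intermediate claim in Proposition 3.6. Every element of `G₀` —
encoded by `A ∈ SL(2,ℝ)` and a compatible winding `α > 0` — is the lifted monodromy of a
smooth potential `q` which is constant equal to a prescribed value `y₀` near the
endpoints of `[0,2π]` and nowhere flat in between. -/
theorem stmt_14 (A : Matrix (Fin 2) (Fin 2) ℝ) (hA : A.det = 1)
    (α : ℝ) (hα : 0 < α)
    (hrow : ∃ r : ℝ, 0 < r ∧ A 0 0 = r * Real.cos α ∧ A 0 1 = r * Real.sin α)
    (y₀ : ℝ) :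
    ∃ ε₁ : ℝ, 0 < ε₁ ∧ ε₁ < π ∧
      ∃ q : ℝ → ℝ, ContDiff ℝ (⊤ : ℕ∞) q ∧
        (∀ t ∈ Icc (0:ℝ) ε₁ ∪ Icc (2 * π - ε₁) (2 * π), q t = y₀) ∧
        (∀ x ∈ Ioo ε₁ (2 * π - ε₁), ∃ k : ℕ, 1 ≤ k ∧ iteratedDeriv k q x ≠ 0) ∧
        ∃ Φ : ℝ → Matrix (Fin 2) (Fin 2) ℝ, ∃ θ : ℝ → ℝ,
          IsFundMatrix q Φ ∧ IsArgLift Φ θ ∧ Φ (2 * π) = A ∧ θ (2 * π) = α := by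
  obtain ⟨P, hP, hP₀, hPy, hP0, hP0'⟩ :=
    exists_ermakovPotential_eq_const y₀ 0 (det_one (n := Fin 2))
  obtain ⟨Q, hQ, hQ₀, hQy, hQA, hQA'⟩ := exists_ermakovPotential_eq_const y₀ (2 * π) hA
  obtain ⟨ε, hε, hεπ, ρ, hρ, hρ₀, hleft, hright, hρω, hphase, hne⟩ :=
    exists_glued_phase_eq hP hQ hP₀ hQ₀ two_pi_pos hα
  rw [zero_add] at hleft hρω hne
  rw [sub_zero, mul_div_cancel_left₀ π two_ne_zero] at hεπ
  have hρ₂ : ContDiff ℝ 2 ρ := hρ.of_le (by norm_cast)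
  have hP₂ : ContDiff ℝ 2 P := hP.of_le le_top
  have hQ₂ : ContDiff ℝ 2 Q := hQ.of_le le_top
  have hleft' := eqOn_deriv_of_uniqueDiffOn (uniqueDiffOn_Iic ε) hleft
    (hρ₂.differentiable two_ne_zero) (hP₂.differentiable two_ne_zero)
  have hright' := eqOn_deriv_of_uniqueDiffOn (uniqueDiffOn_Ici _) hright
    (hρ₂.differentiable two_ne_zero) (hQ₂.differentiable two_ne_zero)
  have hT : 2 * π ∈ Ici (2 * π - ε) := sub_le_self _ hε.le
  refine ⟨ε, hε, hεπ, ermakovPotential ρ, contDiff_ermakovPotential hρ fun t => (hρ₀ t).ne', ?_,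
    fun x => exists_iteratedDeriv_ermakovPotential_ne_zero hρ₂ hρ₀ hρω hP₂ hP₀ hPy hleft hne,
    exists_isFundMatrix_isArgLift hA hrow hρ₂ hρ₀ (by simp [hleft hε.le, hP0])
      (by simp [hleft' hε.le, hP0']) ((hright hT).trans hQA) ((hright' hT).trans hQA') hphase⟩
  rintro t (ht | ht)
  · rw [eqOn_ermakovPotential (uniqueDiffOn_Iic ε) hleft hρ₂ hP₂ ht.2, hPy]
  · rw [eqOn_ermakovPotential (uniqueDiffOn_Ici _) hright hρ₂ hQ₂ ht.1, hQy]
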